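/- For every integer N ≥ 3 (so that n*_N ≥ 2), the expected index of the accepted applicant in the full learning equilibrium, E[τ*_N] = c·∑_{n=1}^{n*_N - 1} S_{n-1}(c) + S_{n*_N - 1}(c)·(n*_N - 1)·∑_{n=n*_N}^{N} 1/(n-1), satisfies E[τ*_N] = N · π*_N. -/

import Mathlib

/-!
Write `H_n = ∑_{k=n}^{N-1} 1/k` and `m = n*_N`. Since `V_n(1) ≥ n/N`, backward induction gives
`V_n(0) ≥ (n/N) H_n` for all `1 ≤ n ≤ N` (`tail_le_secV_fst`), so that `V_n(0) ≥ n/N` and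
`V_n(1) = c n/N + (1-c) V_n(0)` whenever `n < m`. For `n ≥ m` one has `H_n ≤ 1`, the maximum is
attained by `n/N`, and the lower bound is an equality for every `n ≥ m - 1`
(`secV_fst_eq_tail`). For `1 ≤ n ≤ m - 2` the recursion therefore reads
`V_n(0) = c/N + (1 - c/(n+1)) V_{n+1}(0)`; multiplied by `S_n(c)` it telescopes to
`N V_1(1) = c ∑_{n=1}^{k} S_{n-1}(c) + S_k(c) N V_k(0)` for `1 ≤ k ≤ m - 1` (`telescope`).
Taking `k = m - 1` and inserting `N V_{m-1}(0) = (m-1) H_{m-1}` gives the claim.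
-/

open Finset Filter Topology

/-- Threshold `n*_N = min{ n ∈ {1,…,N} : ∑_{k=n}^{N-1} 1/k ≤ 1 }`
(the sum is empty, equal to 0, when `n = N`, so the minimum exists). -/
noncomputable def nstar (N : ℕ) : ℕ :=
  sInf {n : ℕ | 1 ≤ n ∧ n ≤ N ∧ ∑ k ∈ Finset.Ico n N, (1 : ℝ) / k ≤ 1}

/-- Value functions: `(secV c N n).1` is `V_{n,N}(0)` and `(secV c N n).2` is `V_{n,N}(1)`,
defined by backward recursion: `V_{N,N}(0) = 0`, `V_{N,N}(1) = 1`; for `1 ≤ n ≤ N-1`,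
`V_{n,N}(0) = (1/(n+1))·V_{n+1,N}(1) + (n/(n+1))·V_{n+1,N}(0)` and
`V_{n,N}(1) = max{ c·(n/N) + (1-c)·V_{n,N}(0), n/N }`; and
`V_{0,N}(0) = max{ c/N + (1-c)·V_{1,N}(0), 1/N }` (the value `V_{0,N}(1)` is unused, set to 0). -/
noncomputable def secV (c : ℝ) (N : ℕ) (n : ℕ) : ℝ × ℝ :=
  if _h : N ≤ n then (0, 1)
  else
    let next := secV c N (n + 1)
    if n = 0 then
      (max (c / N + (1 - c) * next.1) (1 / N), 0)
    else
      let v0 := (1 / ((n : ℝ) + 1)) * next.2 + ((n : ℝ) / ((n : ℝ) + 1)) * next.1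
      (v0, max (c * ((n : ℝ) / N) + (1 - c) * v0) ((n : ℝ) / N))
termination_by N - n
decreasing_by omega

/-- `S_n(c) = ∏_{k=1}^n (1 - c/k)`, with `S_0(c) = 1` (empty product). -/
noncomputable def Sprod (c : ℝ) (n : ℕ) : ℝ :=
  ∏ k ∈ Finset.Icc 1 n, (1 - c / (k : ℝ))

theorem secV_top (c : ℝ) (N : ℕ) : secV c N N = (0, 1) := by
  rw [secV]; simp

theorem secV_fst {c : ℝ} {N n : ℕ} (h1 : 1 ≤ n) (h2 : n < N) :
    (secV c N n).1 = (1 / ((n : ℝ) + 1)) * (secV c N (n + 1)).2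
      + ((n : ℝ) / ((n : ℝ) + 1)) * (secV c N (n + 1)).1 := by
  rw [secV, dif_neg (by omega)]
  simp only [if_neg (show n ≠ 0 by omega)]

theorem secV_snd {c : ℝ} {N n : ℕ} (h1 : 1 ≤ n) (h2 : n < N) :
    (secV c N n).2 =
      max (c * ((n : ℝ) / N) + (1 - c) * (secV c N n).1) ((n : ℝ) / N) := by
  rw [secV, dif_neg (by omega)]
  simp only [if_neg (show n ≠ 0 by omega)]

theorem le_secV_snd {c : ℝ} {N n : ℕ} (h1 : 1 ≤ n) (h2 : n ≤ N) :
    (n : ℝ) / N ≤ (secV c N n).2 := by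
  rcases h2.lt_or_eq with h | rfl
  · rw [secV_snd h1 h]; exact le_max_right _ _
  · rw [secV_top, div_self (by positivity)]

/-- One backward step for `n ↦ (n/N) H_n`: it solves the recursion for `V_n(0)` with
`V_{n+1}(1)` replaced by `(n+1)/N`. -/
theorem tail_step {N n : ℕ} (h1 : 1 ≤ n) (h2 : n < N) :
    (n : ℝ) / N * ∑ k ∈ Finset.Ico n N, (1 : ℝ) / k =
      (1 / ((n : ℝ) + 1)) * (((n + 1 : ℕ) : ℝ) / N) + ((n : ℝ) / ((n : ℝ) + 1)) *
        (((n + 1 : ℕ) : ℝ) / N * ∑ k ∈ Finset.Ico (n + 1) N, (1 : ℝ) / k) := by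
  have hn : (n : ℝ) ≠ 0 := by positivity
  have hN : (N : ℝ) ≠ 0 := by have : 0 < N := by omega
                              positivity
  have hn1 : (n : ℝ) + 1 ≠ 0 := by positivity
  rw [Finset.sum_eq_sum_Ico_succ_bot h2]
  push_cast
  field_simp

/-- Accepting the first best-so-far applicant after `n` is always a feasible policy, with success
probability `(n/N) H_n`. -/
theorem tail_le_secV_fst {c : ℝ} {N n : ℕ} (h1 : 1 ≤ n) (h2 : n ≤ N) :
    (n : ℝ) / N * ∑ k ∈ Finset.Ico n N, (1 : ℝ) / k ≤ (secV c N n).1 := by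
  induction h2 using Nat.decreasingInduction with
  | self => simp [secV_top]
  | of_succ n hn ih =>
    rw [tail_step h1 hn, secV_fst h1 hn]
    have := le_secV_snd (c := c) (N := N) (n := n + 1) (by omega) hn
    have := ih (by omega)
    gcongr

theorem secV_snd_of_le {c : ℝ} {N n : ℕ} (hc1 : c < 1) (h1 : 1 ≤ n) (h2 : n ≤ N)
    (h : (secV c N n).1 ≤ (n : ℝ) / N) : (secV c N n).2 = (n : ℝ) / N := by
  rcases h2.lt_or_eq with h' | rfl
  · rw [secV_snd h1 h']
    exact max_eq_right (by nlinarith)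
  · rw [secV_top, div_self (by positivity)]

/-- If `H_k ≤ 1` for all later `k`, the lower bound of `tail_le_secV_fst` is attained. -/
theorem secV_fst_eq_tail {c : ℝ} {N n : ℕ} (hc1 : c < 1) (h1 : 1 ≤ n) (h2 : n ≤ N)
    (h : ∀ k, n < k → k ≤ N → ∑ j ∈ Finset.Ico k N, (1 : ℝ) / j ≤ 1) :
    (secV c N n).1 = (n : ℝ) / N * ∑ k ∈ Finset.Ico n N, (1 : ℝ) / k := by
  induction h2 using Nat.decreasingInduction with
  | self => simp [secV_top]
  | of_succ n hn ih =>
    have ih' := ih (by omega) (fun k hk => h k (by omega))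
    have hs : (secV c N (n + 1)).2 = ((n + 1 : ℕ) : ℝ) / N := by
      apply secV_snd_of_le hc1 (by omega) hn
      rw [ih']
      exact mul_le_of_le_one_right (by positivity) (h _ (by omega) hn)
    rw [tail_step h1 hn, secV_fst h1 hn, hs, ih']

theorem nstar_spec {N : ℕ} (hN : 1 ≤ N) :
    1 ≤ nstar N ∧ nstar N ≤ N ∧ ∑ k ∈ Finset.Ico (nstar N) N, (1 : ℝ) / k ≤ 1 :=
  Nat.sInf_mem (s := {n : ℕ | 1 ≤ n ∧ n ≤ N ∧ ∑ k ∈ Finset.Ico n N, (1 : ℝ) / k ≤ 1})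
    ⟨N, hN, le_rfl, by simp⟩

theorem one_lt_tail {N n : ℕ} (h1 : 1 ≤ n) (hn : n < nstar N) (hN : n ≤ N) :
    1 < ∑ k ∈ Finset.Ico n N, (1 : ℝ) / k := by
  by_contra! h
  exact Nat.notMem_of_lt_sInf hn ⟨h1, hN, h⟩

theorem tail_le_one {N n : ℕ} (hN : 1 ≤ N) (hn : nstar N ≤ n) :
    ∑ k ∈ Finset.Ico n N, (1 : ℝ) / k ≤ 1 :=
  (Finset.sum_le_sum_of_subset_of_nonneg (Finset.Ico_subset_Ico_left hn)
    (fun _ _ _ => by positivity)).trans (nstar_spec hN).2.2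

theorem two_le_nstar {N : ℕ} (hN : 3 ≤ N) : 2 ≤ nstar N := by
  obtain ⟨h1, -, h⟩ := nstar_spec (N := N) (by omega)
  by_contra! h2
  rw [show nstar N = 1 by omega, Finset.sum_eq_sum_Ico_succ_bot (by omega),
    Finset.sum_eq_sum_Ico_succ_bot (by omega)] at h
  have : 0 ≤ ∑ k ∈ Finset.Ico (1 + 1 + 1) N, (1 : ℝ) / k :=
    Finset.sum_nonneg fun _ _ => by positivity
  norm_num at h this
  linarith

/-- Below the threshold, waiting is at least as good as stopping. -/
theorem secV_snd_of_lt_nstar {c : ℝ} {N n : ℕ} (hc1 : c < 1) (hN : 1 ≤ N) (h1 : 1 ≤ n)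
    (hn : n < nstar N) :
    (secV c N n).2 = c * ((n : ℝ) / N) + (1 - c) * (secV c N n).1 := by
  have hnN : n < N := hn.trans_le (nstar_spec hN).2.1
  have hle : (n : ℝ) / N ≤ (secV c N n).1 :=
    (le_mul_of_one_le_right (by positivity) (one_lt_tail h1 hn hnN.le).le).trans
      (tail_le_secV_fst h1 hnN.le)
  rw [secV_snd h1 hnN]
  exact max_eq_left (by nlinarith)

theorem Sprod_succ (c : ℝ) (n : ℕ) :
    Sprod c (n + 1) = Sprod c n * (1 - c / ((n : ℝ) + 1)) := by
  simp [Sprod, Finset.prod_Icc_succ_top]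

theorem telescope {c : ℝ} {N k : ℕ} (hc1 : c < 1) (hN : 1 ≤ N) (h1 : 1 ≤ k)
    (hk : k < nstar N) :
    (N : ℝ) * (secV c N 1).2 =
      c * ∑ n ∈ Finset.Icc 1 k, Sprod c (n - 1) + Sprod c k * ((N : ℝ) * (secV c N k).1) := by
  have hN0 : (N : ℝ) ≠ 0 := by positivity
  induction k, h1 using Nat.le_induction with
  | base =>
    rw [secV_snd_of_lt_nstar hc1 hN le_rfl hk]
    simp [Sprod]
    field_simp
  | succ k h1 ih =>
    have hkN : k < N := by have := (nstar_spec hN).2.1; omega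
    rw [ih (by omega), Finset.sum_Icc_succ_top (by omega), secV_fst h1 hkN,
      secV_snd_of_lt_nstar hc1 hN (by omega) hk, Sprod_succ, Nat.add_sub_cancel]
    push_cast
    have : (k : ℝ) + 1 ≠ 0 := by positivity
    field_simp
    ring

/-- For every integer `N ≥ 3` (so that `n*_N ≥ 2`), the expected index of the accepted
applicant in the full learning equilibrium,
`E[τ*_N] = c·∑_{n=1}^{n*_N-1} S_{n-1}(c) + S_{n*_N-1}(c)·(n*_N-1)·∑_{n=n*_N}^{N} 1/(n-1)`,
satisfies `E[τ*_N] = N·π*_N` where `π*_N = V_{1,N}(1)`. -/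
theorem expected_index_eq (c : ℝ) (hc0 : 0 ≤ c) (hc1 : c < 1)
    (N : ℕ) (hN : 3 ≤ N) :
    c * ∑ n ∈ Finset.Icc 1 (nstar N - 1), Sprod c (n - 1) +
      Sprod c (nstar N - 1) * ((nstar N : ℝ) - 1) *
        ∑ n ∈ Finset.Icc (nstar N) N, 1 / ((n : ℝ) - 1) =
    (N : ℝ) * (secV c N 1).2 := by
  have h2 := two_le_nstar hN
  have hle := (nstar_spec (N := N) (by omega)).2.1
  have hN0 : (N : ℝ) ≠ 0 := by have : 0 < N := by omega
                               positivity
  obtain ⟨m, hm⟩ : ∃ m, nstar N = m + 1 := ⟨nstar N - 1, by omega⟩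
  have hV : (secV c N m).1 = (m : ℝ) / N * ∑ k ∈ Finset.Ico m N, (1 : ℝ) / k :=
    secV_fst_eq_tail hc1 (by omega) (by omega)
      fun k hk _ => tail_le_one (by omega) (by omega)
  -- Shifting the index by one identifies the sum in the statement with `H_m`.
  have hsum : ∑ n ∈ Finset.Icc (m + 1) N, 1 / ((n : ℝ) - 1) =
      ∑ k ∈ Finset.Ico m N, (1 : ℝ) / k := by
    have := Finset.sum_Ico_add' (fun n : ℕ => 1 / ((n : ℝ) - 1)) m N 1
    rw [show Finset.Icc (m + 1) N = Finset.Ico (m + 1) (N + 1) by ext; simp, ← this]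
    simp
  rw [telescope (k := m) hc1 (by omega) (by omega) (by omega), hV, hm, hsum,
    Nat.add_sub_cancel]
  push_cast
  field_simp
  ring
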